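/- Each Malmquist–Takenaka function is an eigenfunction of the Hilbert transform: for every integer n and every real x, the truncated singular integrals (1/π) ∫_{{z ∈ ℝ : |x − z| > ε}} φ_n(z)/(x − z) dz converge, as ε → 0⁺, to (−i) · sgn(n) · φ_n(x), where sgn(n) = 1 for n ≥ 0 and sgn(n) = −1 for n < 0. -/

import Mathlib

/-!
The proof is elementary and uses only the fundamental theorem of calculus.

For `n ≥ 0`, up to a constant `φ_n` is `uⁿ / (1 - 2iz)` (`mtfCore`), `u = (1 + 2iz) / (1 - 2iz)`. Since
`(u(z) - u(x)) / (x - z) = -4i / ((1 - 2iz)(1 - 2ix))`, the truncated integrals `I_n` of `mtfCore n` satisfy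
`I_{n+1}(ε) = u(x) I_n(ε) - 4i / (1 - 2ix) · ∫ uⁿ / (1 - 2iz)²`, and the last integrand has the
antiderivative `uⁿ⁺¹ / (4i(n+1))`, which takes the same value at `+∞` and `-∞`; so the last
integral tends to `0` (`tendsto_correction`). Hence the statement for `n` implies that for `n + 1`.

For `n = 0` the integrand `1 / ((1 - 2iz)(x - z))` has the antiderivative
`(log (1 - 2iz) - log |z - x|) / (1 - 2ix)`, whose limits at `±∞` differ by
`(log (-2i) - log (2i)) / (1 - 2ix) = -iπ / (1 - 2ix)` (`tendsto_base`).

Negative indices reduce to these by complex conjugation, as `φ_{-n-1} = -i · conj φ_n` (`mtf_neg`).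
-/

open Complex Filter MeasureTheory

/-- The Malmquist–Takenaka function of index `n : ℤ`. -/
noncomputable def mtf (n : ℤ) (x : ℝ) : ℂ :=
  Complex.I ^ n * (Real.sqrt (2 / Real.pi) : ℂ) *
    (1 + 2 * Complex.I * x) ^ n / (1 - 2 * Complex.I * x) ^ (n + 1)

open Topology

/-- The Malmquist–Takenaka function of index `n ≥ 0` without its normalizing constant. -/
noncomputable def mtfCore (n : ℕ) (z : ℝ) : ℂ :=
  (1 + 2 * I * z) ^ n / (1 - 2 * I * z) ^ (n + 1)

lemma one_sub_ne (z : ℝ) : (1 - 2 * I * z : ℂ) ≠ 0 := by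
  intro h
  have := congrArg Complex.re h
  simp at this

lemma norm_one_add_eq (z : ℝ) : ‖(1 + 2 * I * z : ℂ)‖ = ‖(1 - 2 * I * z : ℂ)‖ := by
  rw [← Complex.norm_conj (1 + 2 * I * z : ℂ)]
  congr 1
  simp [sub_eq_add_neg, map_ofNat]

lemma sq_norm_one_sub (z : ℝ) : ‖(1 - 2 * I * z : ℂ)‖ ^ 2 = 1 + (2 * z) ^ 2 := by
  rw [← Complex.normSq_eq_norm_sq, Complex.normSq_apply]
  simp
  ring

lemma norm_mtfCore (n : ℕ) (z : ℝ) : ‖mtfCore n z‖ = ‖(1 - 2 * I * z : ℂ)‖⁻¹ := by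
  have h : ‖(1 - 2 * I * z : ℂ)‖ ≠ 0 := norm_ne_zero_iff.2 (one_sub_ne z)
  rw [mtfCore, norm_div, norm_pow, norm_pow, norm_one_add_eq, pow_succ]
  field_simp

lemma continuous_mtfCore (n : ℕ) : Continuous (mtfCore n) := by
  unfold mtfCore
  exact Continuous.div (by fun_prop) (by fun_prop) fun z => pow_ne_zero _ (one_sub_ne z)

lemma integrable_inv_one_add_two_mul_sq : Integrable fun z : ℝ => (1 + (2 * z) ^ 2)⁻¹ :=
  integrable_inv_one_add_sq.comp_mul_left' (by norm_num : (2 : ℝ) ≠ 0)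

lemma measurableSet_trunc (x ε : ℝ) : MeasurableSet {z : ℝ | ε < |x - z|} :=
  measurableSet_lt measurable_const (by fun_prop)

lemma trunc_eq_union (x ε : ℝ) :
    {z : ℝ | ε < |x - z|} = Set.Iio (x - ε) ∪ Set.Ioi (x + ε) := by
  ext z
  simp only [Set.mem_ofPred_eq, Set.mem_union, Set.mem_Iio, Set.mem_Ioi, lt_abs]
  constructor
  · rintro (h | h)
    · left; linarith
    · right; linarith
  · rintro (h | h)
    · left; linarith
    · right; linarith

/-- Away from the singularity both factors of the integrand are square integrable. -/
lemma integrableOn_mtfCore_div (n : ℕ) (x ε : ℝ) (hε : 0 < ε) :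
    IntegrableOn (fun z : ℝ => mtfCore n z / ((x : ℂ) - z)) {z : ℝ | ε < |x - z|} := by
  have hb : Integrable fun z : ℝ =>
      (1 + (2 * z) ^ 2)⁻¹ + (1 + (ε ^ 2)⁻¹) * (1 + (x - z) ^ 2)⁻¹ :=
    integrable_inv_one_add_two_mul_sq.add
      ((integrable_inv_one_add_sq.comp_sub_left x).const_mul _)
  refine Integrable.mono' hb.integrableOn ?_ ?_
  · refine Measurable.aestronglyMeasurable ?_
    exact (continuous_mtfCore n).measurable.div (by fun_prop)
  · refine (ae_restrict_iff' (measurableSet_trunc x ε)).2 (Eventually.of_forall fun z hz => ?_)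
    have hz : ε < |x - z| := hz
    have hd : (0 : ℝ) < |x - z| := hε.trans hz
    rw [norm_div, norm_mtfCore, ← Complex.ofReal_sub, Complex.norm_real, Real.norm_eq_abs,
      ← sq_norm_one_sub, div_eq_mul_inv]
    set a := ‖(1 - 2 * I * z : ℂ)‖⁻¹ with ha
    have h1 : (‖(1 - 2 * I * z : ℂ)‖ ^ 2)⁻¹ = a ^ 2 := by rw [ha, inv_pow]
    have h2 : (|x - z|⁻¹) ^ 2 ≤ (1 + (ε ^ 2)⁻¹) * (1 + (x - z) ^ 2)⁻¹ := by
      rw [← sq_abs (x - z), inv_pow, ← div_eq_mul_inv, le_div_iff₀ (by positivity), mul_add,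
        inv_mul_cancel₀ (by positivity), mul_one, add_comm]
      gcongr
    rw [h1]
    nlinarith [sq_nonneg (a - |x - z|⁻¹), sq_nonneg a, sq_nonneg (|x - z|⁻¹)]

/-- The fundamental theorem of calculus for a truncated integral, the integrand having an
antiderivative on both sides of the removed interval. -/
lemma integral_trunc {F f : ℝ → ℂ} {A B : ℂ} {x ε : ℝ} (hε : 0 < ε)
    (hF : ∀ z, z ≠ x → HasDerivAt F (f z) z) (hf : IntegrableOn f {z : ℝ | ε < |x - z|})
    (hA : Tendsto F atTop (𝓝 A)) (hB : Tendsto F atBot (𝓝 B)) :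
    ∫ z in {z : ℝ | ε < |x - z|}, f z = A - B + (F (x - ε) - F (x + ε)) := by
  rw [trunc_eq_union x ε] at hf ⊢
  have hl := hf.left_of_union
  have hl' : IntegrableOn f (Set.Iic (x - ε)) := by rwa [integrableOn_Iic_iff_integrableOn_Iio]
  have hr := hf.right_of_union
  rw [setIntegral_union _ measurableSet_Ioi hl hr, ← integral_Iic_eq_integral_Iio,
    integral_Iic_of_hasDerivAt_of_tendsto' _ hl' hB,
    integral_Ioi_of_hasDerivAt_of_tendsto' _ hr hA]
  · ring
  · intro z hz
    exact hF z (by have : x + ε ≤ z := hz; intro h; linarith)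
  · intro z hz
    exact hF z (by have : z ≤ x - ε := hz; intro h; linarith)
  · rw [Set.disjoint_left]
    intro z (h1 : z < x - ε) (h2 : x + ε < z)
    linarith

lemma tendsto_sub_add {F : ℝ → ℂ} {x : ℝ} (hF : ContinuousAt F x) :
    Tendsto (fun ε : ℝ => F (x - ε) - F (x + ε)) (𝓝[>] 0) (𝓝 0) := by
  have h1 : Tendsto (fun ε : ℝ => x - ε) (𝓝[>] 0) (𝓝 x) := by
    have : Tendsto (fun ε : ℝ => x - ε) (𝓝 0) (𝓝 (x - 0)) :=
      (continuous_const.sub continuous_id).tendsto _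
    rw [sub_zero] at this
    exact this.mono_left nhdsWithin_le_nhds
  have h2 : Tendsto (fun ε : ℝ => x + ε) (𝓝[>] 0) (𝓝 x) := by
    have : Tendsto (fun ε : ℝ => x + ε) (𝓝 0) (𝓝 (x + 0)) :=
      (continuous_const.add continuous_id).tendsto _
    rw [add_zero] at this
    exact this.mono_left nhdsWithin_le_nhds
  simpa using (hF.tendsto.comp h1).sub (hF.tendsto.comp h2)

lemma hasDerivAt_lin (c : ℂ) (z : ℝ) : HasDerivAt (fun t : ℝ => 1 + c * (t : ℂ)) c z := by
  simpa using ((hasDerivAt_id z).ofReal_comp.const_mul c).const_add 1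

lemma hasDerivAt_one_sub (z : ℝ) :
    HasDerivAt (fun t : ℝ => (1 - 2 * I * t : ℂ)) (-(2 * I)) z := by
  simpa [sub_eq_add_neg] using hasDerivAt_lin (-(2 * I)) z

lemma tendsto_inv_one_sub {l : Filter ℝ} (hl : Tendsto (fun z : ℝ => |z|) l atTop) :
    Tendsto (fun z : ℝ => (1 - 2 * I * z : ℂ)⁻¹) l (𝓝 0) := by
  refine squeeze_zero_norm' ?_ (tendsto_inv_atTop_zero.comp hl)
  filter_upwards [hl.eventually_gt_atTop 0] with z hz
  rw [norm_inv, Function.comp_apply]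
  refine inv_anti₀ hz (abs_le_of_sq_le_sq' ?_ (norm_nonneg _)).2
  rw [sq_norm_one_sub, sq_abs]
  nlinarith [sq_nonneg z]

lemma tendsto_cayley {l : Filter ℝ} (hl : Tendsto (fun z : ℝ => |z|) l atTop) :
    Tendsto (fun z : ℝ => (1 + 2 * I * z : ℂ) / (1 - 2 * I * z)) l (𝓝 (-1)) := by
  have h := ((tendsto_inv_one_sub hl).const_mul 2).const_add (-1)
  rw [mul_zero, add_zero] at h
  refine h.congr fun z => ?_
  have := one_sub_ne z
  field_simp
  ring

lemma integrable_mtfCore_div (n : ℕ) :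
    Integrable fun z : ℝ => mtfCore n z / (1 - 2 * I * z) := by
  refine Integrable.mono' integrable_inv_one_add_two_mul_sq ?_ (Eventually.of_forall fun z => ?_)
  · exact ((continuous_mtfCore n).div (by fun_prop) one_sub_ne).aestronglyMeasurable
  · rw [norm_div, norm_mtfCore, ← sq_norm_one_sub, div_eq_mul_inv, sq, mul_inv]

lemma hasDerivAt_cayley_pow (n : ℕ) (z : ℝ) :
    HasDerivAt (fun t : ℝ => ((1 + 2 * I * t : ℂ) / (1 - 2 * I * t)) ^ (n + 1) / (4 * I * (n + 1)))
      (mtfCore n z / (1 - 2 * I * z)) z := by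
  have hz := one_sub_ne z
  have hn : (n + 1 : ℂ) ≠ 0 := Nat.cast_add_one_ne_zero n
  refine ((((hasDerivAt_lin (2 * I) z).fun_div (hasDerivAt_one_sub z) hz).fun_pow
    (n + 1)).div_const (4 * I * (n + 1))).congr_deriv ?_
  simp only [mtfCore, Nat.cast_add, Nat.cast_one, Nat.add_sub_cancel, div_pow]
  field_simp
  ring

/-- The correction term of the recursion in `n` vanishes in the limit. -/
lemma tendsto_correction (n : ℕ) (x : ℝ) :
    Tendsto (fun ε : ℝ => ∫ z in {z : ℝ | ε < |x - z|}, mtfCore n z / (1 - 2 * I * z))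
      (𝓝[>] 0) (𝓝 0) := by
  have hlim : ∀ {l : Filter ℝ}, Tendsto (fun z : ℝ => |z|) l atTop → Tendsto
      (fun t : ℝ => ((1 + 2 * I * t : ℂ) / (1 - 2 * I * t)) ^ (n + 1) / (4 * I * (n + 1)))
      l (𝓝 ((-1) ^ (n + 1) / (4 * I * (n + 1)))) :=
    fun hl => ((tendsto_cayley hl).pow (n + 1)).div_const _
  refine (tendsto_sub_add (hasDerivAt_cayley_pow n x).continuousAt).congr' ?_
  filter_upwards [self_mem_nhdsWithin] with ε hε
  rw [integral_trunc hε (fun z _ => hasDerivAt_cayley_pow n z)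
    (integrable_mtfCore_div n).integrableOn (hlim tendsto_abs_atTop_atTop)
    (hlim tendsto_abs_atBot_atTop), sub_self, zero_add]

lemma one_sub_mem_slitPlane (z : ℝ) : (1 - 2 * I * z : ℂ) ∈ slitPlane := by
  left; simp

lemma log_two_mul {w : ℂ} (hw : w ≠ 0) : log (2 * w) = (Real.log 2 : ℂ) + log w := by
  have := Complex.log_ofReal_mul (r := 2) (by norm_num) hw
  simpa using this

/-- `(1 - 2iz) / (z - x) → -2i` as `|z| → ∞`. -/
lemma tendsto_ratio (x : ℝ) {l : Filter ℝ} (hl : Tendsto (fun z : ℝ => |z - x|) l atTop) :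
    Tendsto (fun z : ℝ => (1 - 2 * I * z : ℂ) / ((z : ℂ) - x)) l (𝓝 (2 * -I)) := by
  have h0 : Tendsto (fun z : ℝ => ((z : ℂ) - x)⁻¹) l (𝓝 0) := by
    rw [tendsto_zero_iff_norm_tendsto_zero]
    refine (tendsto_inv_atTop_zero.comp hl).congr fun z => ?_
    rw [norm_inv, ← Complex.ofReal_sub, Complex.norm_real, Real.norm_eq_abs, Function.comp_apply]
  have h := (h0.const_mul (1 - 2 * I * x)).const_add (2 * -I)
  rw [mul_zero, add_zero] at h
  refine h.congr' ?_
  filter_upwards [hl.eventually_gt_atTop 0] with z hz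
  have : ((z : ℂ) - x) ≠ 0 := by
    rw [← Complex.ofReal_sub]
    exact_mod_cast abs_pos.1 hz
  field_simp
  ring

-- `Real.log (t - x)` is `log |t - x|` on both sides of `x`.
lemma tendsto_log_atTop (x : ℝ) :
    Tendsto (fun t : ℝ => log (1 - 2 * I * t) - (Real.log (t - x) : ℂ)) atTop
      (𝓝 ((Real.log 2 : ℂ) + log (-I))) := by
  have hl : Tendsto (fun z : ℝ => |z - x|) atTop atTop :=
    tendsto_abs_atTop_atTop.comp (tendsto_atTop_add_const_right _ (-x) tendsto_id)
  have h := (tendsto_ratio x hl).clog (by right; simp)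
  rw [log_two_mul (by simp)] at h
  refine h.congr' ?_
  filter_upwards [eventually_gt_atTop x] with z hz
  have hp : 0 < z - x := sub_pos.2 hz
  have hz' : ((z : ℂ) - x) ≠ 0 := by rw [← Complex.ofReal_sub]; exact_mod_cast hp.ne'
  have e := Complex.log_ofReal_mul hp (div_ne_zero (one_sub_ne z) hz')
  rw [Complex.ofReal_sub, mul_div_cancel₀ _ hz'] at e
  rw [e]
  ring

lemma tendsto_log_atBot (x : ℝ) :
    Tendsto (fun t : ℝ => log (1 - 2 * I * t) - (Real.log (t - x) : ℂ)) atBot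
      (𝓝 ((Real.log 2 : ℂ) + log I)) := by
  have hl : Tendsto (fun z : ℝ => |z - x|) atBot atTop :=
    tendsto_abs_atBot_atTop.comp (tendsto_atBot_add_const_right _ (-x) tendsto_id)
  have h := (tendsto_ratio x hl).neg.clog (by right; simp)
  rw [show -(2 * -I) = 2 * I by ring, log_two_mul I_ne_zero] at h
  refine h.congr' ?_
  filter_upwards [eventually_lt_atBot x] with z hz
  have hp : 0 < -(z - x) := by linarith
  have hz' : ((z : ℂ) - x) ≠ 0 := by
    rw [← Complex.ofReal_sub]; exact_mod_cast (sub_neg.2 hz).ne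
  have e := Complex.log_ofReal_mul hp (neg_ne_zero.2 (div_ne_zero (one_sub_ne z) hz'))
  rw [Complex.ofReal_neg, Complex.ofReal_sub, neg_mul_neg, mul_div_cancel₀ _ hz',
    Real.log_neg_eq_log] at e
  rw [e]
  ring

lemma hasDerivAt_log_sub (x z : ℝ) (hz : z ≠ x) :
    HasDerivAt (fun t : ℝ => (log (1 - 2 * I * t) - (Real.log (t - x) : ℂ)) / (1 - 2 * I * x))
      (mtfCore 0 z / ((x : ℂ) - z)) z := by
  have h1 := (hasDerivAt_one_sub z).clog_real (one_sub_mem_slitPlane z)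
  have h2 := (((hasDerivAt_id z).sub_const x).log (sub_ne_zero.2 hz)).ofReal_comp
  refine ((h1.sub h2).div_const (1 - 2 * I * x)).congr_deriv ?_
  have hz1 := one_sub_ne z
  have hx1 := one_sub_ne x
  have hzx : ((z : ℂ) - x) ≠ 0 := sub_ne_zero.2 (by exact_mod_cast hz)
  have hxz : ((x : ℂ) - z) ≠ 0 := sub_ne_zero.2 (by exact_mod_cast hz.symm)
  simp only [mtfCore, id, Complex.ofReal_div, Complex.ofReal_one, Complex.ofReal_sub]
  rw [← neg_sub (x : ℂ) z]
  field_simp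
  ring

/-- The case `n = 0`; the boundary terms at `x - ε` and `x + ε` cancel in the limit. -/
lemma tendsto_base (x : ℝ) :
    Tendsto (fun ε : ℝ => ∫ z in {z : ℝ | ε < |x - z|}, mtfCore 0 z / ((x : ℂ) - z))
      (𝓝[>] 0) (𝓝 (-(Real.pi * I) * mtfCore 0 x)) := by
  have hc := (hasDerivAt_one_sub x).clog_real (one_sub_mem_slitPlane x)
  have h := ((tendsto_sub_add hc.continuousAt).const_add (-(Real.pi * I))).div_const
    (1 - 2 * I * x)
  rw [add_zero] at h
  have e : -(Real.pi * I) * mtfCore 0 x = -(Real.pi * I) / (1 - 2 * I * x) := by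
    simp [mtfCore, div_eq_mul_inv]
  rw [e]
  refine h.congr' ?_
  filter_upwards [self_mem_nhdsWithin] with ε hε
  rw [integral_trunc hε (hasDerivAt_log_sub x) (integrableOn_mtfCore_div 0 x ε hε)
    ((tendsto_log_atTop x).div_const _) ((tendsto_log_atBot x).div_const _),
    Complex.log_I, Complex.log_neg_I]
  -- The two logarithms of `|z - x| = ε` cancel.
  rw [show x - ε - x = -ε by ring, show x + ε - x = ε by ring, Real.log_neg_eq_log]
  ring

/-- The pointwise identity behind the recursion in `n`. -/
lemma mtfCore_succ_div (n : ℕ) (x z : ℝ) (hz : z ≠ x) :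
    mtfCore (n + 1) z / ((x : ℂ) - z) =
      (1 + 2 * I * x) / (1 - 2 * I * x) * (mtfCore n z / ((x : ℂ) - z)) +
        -(4 * I) / (1 - 2 * I * x) * (mtfCore n z / (1 - 2 * I * z)) := by
  have hz1 := one_sub_ne z
  have hx1 := one_sub_ne x
  have hxz : ((x : ℂ) - z) ≠ 0 := sub_ne_zero.2 (by exact_mod_cast hz.symm)
  simp only [mtfCore]
  field_simp
  ring

lemma tendsto_mtfCore (n : ℕ) (x : ℝ) :
    Tendsto (fun ε : ℝ => ∫ z in {z : ℝ | ε < |x - z|}, mtfCore n z / ((x : ℂ) - z))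
      (𝓝[>] 0) (𝓝 (-(Real.pi * I) * mtfCore n x)) := by
  induction n with
  | zero => exact tendsto_base x
  | succ n ih =>
    have h := (ih.const_mul ((1 + 2 * I * x) / (1 - 2 * I * x))).add
      ((tendsto_correction n x).const_mul (-(4 * I) / (1 - 2 * I * x)))
    have e : (1 + 2 * I * x) / (1 - 2 * I * x) * (-(Real.pi * I) * mtfCore n x) +
        -(4 * I) / (1 - 2 * I * x) * 0 = -(Real.pi * I) * mtfCore (n + 1) x := by
      have := one_sub_ne x
      simp only [mtfCore]
      field_simp
      ring
    rw [e] at h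
    refine h.congr' ?_
    filter_upwards [self_mem_nhdsWithin] with ε hε
    rw [← integral_const_mul, ← integral_const_mul, ← integral_add
      ((integrableOn_mtfCore_div n x ε hε).const_mul _)
      ((integrable_mtfCore_div n).integrableOn.const_mul _)]
    refine setIntegral_congr_fun (measurableSet_trunc x ε) fun z hz => ?_
    refine (mtfCore_succ_div n x z ?_).symm
    rintro rfl
    have h1 : ε < |z - z| := hz
    have h2 : 0 < ε := hε
    simp at h1
    linarith

lemma mtf_natCast (n : ℕ) (z : ℝ) :
    mtf n z = I ^ n * (Real.sqrt (2 / Real.pi) : ℂ) * mtfCore n z := by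
  have : (n : ℤ) + 1 = ((n + 1 : ℕ) : ℤ) := by push_cast; rfl
  rw [mtf, this, zpow_natCast, zpow_natCast, zpow_natCast, mtfCore, mul_div_assoc]

/-- Conjugation exchanges the indices `n` and `-n - 1`. -/
lemma mtf_neg (n : ℕ) (z : ℝ) :
    mtf (Int.negSucc n) z = -I * (starRingEnd ℂ) (mtf n z) := by
  have e : Int.negSucc n + 1 = -(n : ℤ) := by rw [Int.negSucc_eq]; ring
  rw [mtf_natCast, mtf, e, zpow_negSucc, zpow_negSucc, zpow_neg, zpow_natCast, mtfCore,
    ← inv_pow, Complex.inv_I]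
  simp only [map_mul, map_div₀, map_pow, map_add, map_sub, map_one, Complex.conj_I,
    Complex.conj_ofReal, map_ofNat]
  rw [show (1 + 2 * -I * z : ℂ) = 1 - 2 * I * z by ring,
    show (1 - 2 * -I * z : ℂ) = 1 + 2 * I * z by ring, div_inv_eq_mul, pow_succ (-I)]
  ring

lemma tendsto_mtf_natCast (n : ℕ) (x : ℝ) :
    Tendsto (fun ε : ℝ =>
        (Real.pi : ℂ)⁻¹ * ∫ z in {z : ℝ | ε < |x - z|}, mtf n z / ((x : ℂ) - (z : ℂ)))
      (𝓝[>] 0) (𝓝 (-I * mtf n x)) := by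
  have h := ((tendsto_mtfCore n x).const_mul (I ^ n * (Real.sqrt (2 / Real.pi) : ℂ))).const_mul
    (Real.pi : ℂ)⁻¹
  have hpi : (Real.pi : ℂ) ≠ 0 := by exact_mod_cast Real.pi_ne_zero
  convert h using 2
  · rw [← integral_const_mul (I ^ n * _)]
    simp only [mtf_natCast, mul_div_assoc]
  · rw [mtf_natCast]
    field_simp

/-- The Malmquist–Takenaka functions are eigenfunctions of the Hilbert transform:
the truncated singular integrals converge to `(-i) sgn(n) φ_n(x)` as `ε → 0⁺`. -/
theorem mtf_hilbert_eigen (n : ℤ) (x : ℝ) :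
    Tendsto (fun ε : ℝ =>
        (Real.pi : ℂ)⁻¹ * ∫ z in {z : ℝ | ε < |x - z|}, mtf n z / ((x : ℂ) - (z : ℂ)))
      (nhdsWithin 0 (Set.Ioi 0))
      (nhds (-Complex.I * (if 0 ≤ n then 1 else -1) * mtf n x)) := by
  cases n with
  | ofNat n => simpa using tendsto_mtf_natCast n x
  | negSucc n =>
    have h := ((Complex.continuous_conj.tendsto _).comp (tendsto_mtf_natCast n x)).const_mul (-I)
    have hneg : ¬ (0 ≤ Int.negSucc n) := by simp
    rw [if_neg hneg]
    convert h using 2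
    · simp only [Function.comp_apply, map_mul, map_inv₀, Complex.conj_ofReal]
      rw [← integral_conj, mul_left_comm, ← integral_const_mul (-I)]
      simp only [mtf_neg, map_div₀, map_sub, Complex.conj_ofReal, mul_div_assoc]
    · rw [mtf_neg]
      simp
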